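/- Every annular continuum E ⊆ 𝔸 contains a circloid; in fact both 𝒞⁺(E) and 𝒞⁻(E) are circloids contained in E. -/

import Mathlib

open Filter Topology

local notation "⟪" x ", " y "⟫" => @inner ℝ _ _ x y

noncomputable section

/-- The open annulus `𝔸 = 𝕋¹ × ℝ`. -/
abbrev Ann := AddCircle (1 : ℝ) × ℝ

/-- `S ⊆ 𝔸` is unbounded from above in the `ℝ`-coordinate. -/
def UnbAbove (S : Set Ann) : Prop := ¬ BddAbove (Prod.snd '' S)

/-- `S ⊆ 𝔸` is unbounded from below in the `ℝ`-coordinate. -/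
def UnbBelow (S : Set Ann) : Prop := ¬ BddBelow (Prod.snd '' S)

/-- `S ⊆ 𝔸` is bounded (equivalently, bounded in the `ℝ`-coordinate). -/
def BoundedA (S : Set Ann) : Prop := BddAbove (Prod.snd '' S) ∧ BddBelow (Prod.snd '' S)

/-- `E ⊆ 𝔸` is essential: no connected component of its complement is unbounded both
above and below. -/
def EssentialA (E : Set Ann) : Prop :=
  ∀ x ∈ Eᶜ, ¬ (UnbAbove (connectedComponentIn Eᶜ x) ∧ UnbBelow (connectedComponentIn Eᶜ x))

/-- An annular continuum: a compact connected set whose complement has exactly two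
connected components, both unbounded. -/
def IsAnnularContinuum (E : Set Ann) : Prop :=
  IsCompact E ∧ IsConnected E ∧
  (∀ x ∈ Eᶜ, ¬ BoundedA (connectedComponentIn Eᶜ x)) ∧
  ∃ x y, x ∈ Eᶜ ∧ y ∈ Eᶜ ∧ connectedComponentIn Eᶜ x ≠ connectedComponentIn Eᶜ y ∧
    ∀ z ∈ Eᶜ, connectedComponentIn Eᶜ z = connectedComponentIn Eᶜ x ∨
      connectedComponentIn Eᶜ z = connectedComponentIn Eᶜ y

/-- A circloid: an annular continuum containing no strictly smaller annular continuum. -/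
def IsCircloidA (C : Set Ann) : Prop :=
  IsAnnularContinuum C ∧ ∀ E ⊆ C, IsAnnularContinuum E → E = C

/-- `ℒ(U)`: the connected component of `𝔸 \ cl(U)` unbounded from below (for a
generating set it is unique; in general we take the union of all components of
`𝔸 \ cl(U)` unbounded from below). -/
def lowerComp (U : Set Ann) : Set Ann :=
  {z | z ∈ (closure U)ᶜ ∧ UnbBelow (connectedComponentIn (closure U)ᶜ z)}

/-- `𝒰(L)`: the connected component of `𝔸 \ cl(L)` unbounded from above. -/
def upperComp (L : Set Ann) : Set Ann :=
  {z | z ∈ (closure L)ᶜ ∧ UnbAbove (connectedComponentIn (closure L)ᶜ z)}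

/-- An upper generating set: bounded from below with essential closure. -/
def UpperGen (U : Set Ann) : Prop := BddBelow (Prod.snd '' U) ∧ EssentialA (closure U)

/-- A lower generating set: bounded from above with essential closure. -/
def LowerGen (L : Set Ann) : Prop := BddAbove (Prod.snd '' L) ∧ EssentialA (closure L)

/-- `𝒞⁻(U) = 𝔸 \ (𝒰ℒ(U) ∪ ℒ𝒰ℒ(U))`. -/
def Cminus (U : Set Ann) : Set Ann :=
  (upperComp (lowerComp U) ∪ lowerComp (upperComp (lowerComp U)))ᶜ

/-- `𝒞⁺(L) = 𝔸 \ (ℒ𝒰(L) ∪ 𝒰ℒ𝒰(L))`. -/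
def Cplus (L : Set Ann) : Set Ann :=
  (lowerComp (upperComp L) ∪ upperComp (lowerComp (upperComp L)))ᶜ

theorem ann_openQuot : IsOpenQuotientMap
    (Prod.map (fun x : ℝ => (x : AddCircle (1:ℝ))) (id : ℝ → ℝ)) :=
  IsOpenQuotientMap.prodMap QuotientAddGroup.isOpenQuotientMap_mk IsOpenQuotientMap.id

theorem ann_lc : LocallyConnectedSpace Ann := by
  have : LocallyPathConnectedSpace Ann :=
    ann_openQuot.isQuotientMap.locallyPathConnectedSpace
  infer_instance

theorem int_const {X : Type*} [TopologicalSpace X] {S : Set X} (hS : IsPreconnected S)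
    {g : X → ℝ} (hg : ContinuousOn g S) (hi : ∀ x ∈ S, ∃ n : ℤ, g x = n)
    {x y : X} (hx : x ∈ S) (hy : y ∈ S) : g x = g y := by
  have key : ∀ x ∈ S, ∀ y ∈ S, ¬ g x < g y := by
    intro x hx y hy hlt
    obtain ⟨n, hn⟩ := hi x hx
    obtain ⟨m, hm⟩ := hi y hy
    have h1 : n + 1 ≤ m := by
      have : (n:ℝ) < m := by rw [← hn, ← hm]; exact hlt
      have : n < m := by exact_mod_cast this
      omega
    have h2 : (n:ℝ) + 1 ≤ m := by exact_mod_cast h1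
    have h3 : (n:ℝ) + 1/2 ∈ g '' S := by
      apply hS.intermediate_value hx hy hg
      constructor <;> linarith
    obtain ⟨z, hz, hz2⟩ := h3
    obtain ⟨k, hk⟩ := hi z hz
    have h4 : (2 * k : ℝ) = 2 * n + 1 := by linarith
    have h5 : 2 * k = 2 * n + 1 := by exact_mod_cast h4
    omega
  exact le_antisymm (not_lt.1 (key y hy x hx)) (not_lt.1 (key x hx y hy))

theorem coe_zero_int {r : ℝ} (h : (r : AddCircle (1:ℝ)) = 0) : ∃ n : ℤ, r = n := by
  obtain ⟨n, hn⟩ := (AddCircle.coe_eq_zero_iff (1:ℝ)).1 h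
  exact ⟨n, by simpa using hn.symm⟩

/-- Lifting of circle valued maps on the annulus which vanish near the bottom end. -/
theorem ann_lift (F : Ann → AddCircle (1:ℝ)) (hF : Continuous F) (m : ℝ)
    (hm : ∀ p : Ann, p.2 < m → F p = 0) :
    ∃ ψ : Ann → ℝ, Continuous ψ ∧ ∀ p, (ψ p : AddCircle (1:ℝ)) = F p := by
  let π : ℝ × ℝ → Ann := Prod.map (fun x : ℝ => (x : AddCircle (1:ℝ))) id
  have hπ : Continuous π := ann_openQuot.continuous
  obtain ⟨e₀, he₀⟩ := QuotientAddGroup.mk_surjective (F (π (0,0)))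
  obtain ⟨G, ⟨-, hG⟩, -⟩ := (AddCircle.isCoveringMap_coe (1:ℝ)).existsUnique_continuousMap_lifts
    ⟨F ∘ π, hF.comp hπ⟩ (0,0) e₀ he₀
  have hG' : ∀ q, (G q : AddCircle (1:ℝ)) = F (π q) := fun q => congrFun hG q
  have hGc : Continuous G := G.continuous
  have hπ1 : ∀ x y : ℝ, π (x + 1, y) = π (x, y) := by
    intro x y
    simp [π]
  have hper : ∀ x y : ℝ, G (x + 1, y) = G (x, y) := by
    intro x y
    have hc : Continuous (fun q : ℝ × ℝ => G (q.1 + 1, q.2) - G q) := by fun_prop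
    have h1 := int_const (isPreconnected_univ (α := ℝ × ℝ)) hc.continuousOn (by
      intro q _
      apply coe_zero_int
      rw [AddCircle.coe_sub, hG', hG', hπ1]
      simp) (Set.mem_univ (x, y)) (Set.mem_univ (0, m - 1))
    have h2 : G ((0:ℝ) + 1, m - 1) = G (0, m - 1) := by
      refine int_const (S := Set.univ ×ˢ Set.Iio m) ?_ hGc.continuousOn ?_ ?_ ?_
      · exact isPreconnected_univ.prod isPreconnected_Iio
      · rintro q ⟨-, hq⟩
        apply coe_zero_int
        rw [hG']
        exact hm _ hq
      · simp
      · simp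
    simp only at h1
    linarith
  let ψ : Ann → ℝ := fun p => Function.Periodic.lift (f := fun x => G (x, p.2)) (c := 1)
    (fun x => hper x p.2) p.1
  have hψ : ∀ q, ψ (π q) = G q := fun q => rfl
  refine ⟨ψ, ?_, ?_⟩
  · rw [ann_openQuot.isQuotientMap.continuous_iff]
    exact hGc
  · intro p
    obtain ⟨q, rfl⟩ := ann_openQuot.surjective p
    exact hG' q

/-- Janiszewski type lemma. -/
theorem ann_jan {A B U L : Set Ann} (hA : IsClosed A) (hB : IsClosed B) (hAB : Disjoint A B)
    (hU : IsOpen U) (hL : IsOpen L) (hUL : Disjoint U L) (hc : (U ∪ L)ᶜ = A ∪ B)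
    (m : ℝ) (hm : ∀ p : Ann, p.2 < m → p ∈ L) {t b : Ann} (ht : t ∈ U) (hb : b ∈ L)
    (h1 : b ∈ connectedComponentIn Aᶜ t) (h2 : b ∈ connectedComponentIn Bᶜ t) : False := by
  classical
  obtain ⟨φ, hφA, hφB, -⟩ := exists_continuous_zero_one_of_isClosed hA hB hAB
  have hφc : Continuous φ := φ.continuous
  have hfr : ∀ a ∈ frontier U, a ∈ A ∪ B := by
    intro a ha
    rw [← hc]
    rintro (h | h)
    · rw [hU.frontier_eq] at ha
      exact ha.2 h
    · exact (hUL.closure_left hL).le_bot ⟨frontier_subset_closure ha, h⟩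
  have hone : ((1:ℝ) : AddCircle (1:ℝ)) = 0 := AddCircle.coe_period 1
  let F : Ann → AddCircle (1:ℝ) := fun p => if p ∈ U then (φ p : AddCircle (1:ℝ)) else 0
  have hF : Continuous F := by
    refine Continuous.if ?_ ?_ continuous_const
    · intro a ha
      rcases hfr a ha with h | h
      · rw [hφA h]; simp
      · rw [hφB h]; simpa using hone
    · exact (AddCircle.continuous_mk' (1:ℝ)).comp hφc
  obtain ⟨ψ, hψc, hψ⟩ := ann_lift F hF m (fun p hp =>
    if_neg (fun h => hUL.le_bot ⟨h, hm p hp⟩))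
  have hbU : b ∉ U := fun h => hUL.le_bot ⟨h, hb⟩
  have key : ∀ (D : Set Ann) (c : ℝ), (∃ n : ℤ, c = n) → (∀ a ∈ Dᶜ, a ∈ A ∪ B → φ a = c) →
      b ∈ connectedComponentIn Dᶜ t → ψ t - φ t + c = ψ b := by
    intro D c hcn hD hbt
    have htD : t ∈ connectedComponentIn Dᶜ t :=
      mem_connectedComponentIn (connectedComponentIn_nonempty_iff.1 ⟨b, hbt⟩)
    have := int_const (S := connectedComponentIn Dᶜ t)
      (g := fun p => if p ∈ U then ψ p - φ p + c else ψ p)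
      isPreconnected_connectedComponentIn ?_ ?_ htD hbt
    · simpa [ht, hbU] using this
    · apply ContinuousOn.if
      · rintro a ⟨ha, ha2⟩
        rw [hD a (connectedComponentIn_subset _ _ ha) (hfr a ha2)]
        ring
      · fun_prop
      · fun_prop
    · intro p _
      have hp := hψ p
      by_cases hpU : p ∈ U
      · simp only [F, hpU, if_true] at hp ⊢
        obtain ⟨k, hk⟩ := coe_zero_int (r := ψ p - φ p) (by rw [AddCircle.coe_sub, hp, sub_self])
        obtain ⟨n, hn⟩ := hcn
        exact ⟨k + n, by rw [hk, hn]; push_cast; ring⟩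
      · simp only [F, hpU, if_false] at hp ⊢
        exact coe_zero_int hp
  have e1 := key A 1 ⟨1, by simp⟩ (fun a ha h => hφB (h.resolve_left ha)) h1
  have e2 := key B 0 ⟨0, by simp⟩ (fun a ha h => hφA (h.resolve_right ha)) h2
  linarith

/-- A pair of mutually maximal disjoint domains containing the two ends. -/
structure EndPair (U L : Set Ann) : Prop where
  oU : IsOpen U
  oL : IsOpen L
  cU : IsPreconnected U
  cL : IsPreconnected L
  dj : Disjoint U L
  eU : ∃ M : ℝ, ∀ p : Ann, M < p.2 → p ∈ U
  eL : ∃ m : ℝ, ∀ p : Ann, p.2 < m → p ∈ L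
  mU : ∀ V, IsOpen V → IsPreconnected V → U ⊆ V → Disjoint V L → V ⊆ U
  mL : ∀ V, IsOpen V → IsPreconnected V → L ⊆ V → Disjoint U V → V ⊆ L

theorem EndPair.aux {U L A B : Set Ann} (h : EndPair U L) (hA : IsClosed A) (hB : IsClosed B)
    (hAB : Disjoint A B) (hc : (U ∪ L)ᶜ = A ∪ B) {t b : Ann} (ht : t ∈ U) (hb : b ∈ L)
    (h1 : b ∉ connectedComponentIn Aᶜ t) : B = ∅ := by
  have := ann_lc
  have hUA : U ⊆ Aᶜ := fun x hx hxA => by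
    have : x ∈ (U ∪ L)ᶜ := hc ▸ Or.inl hxA
    exact this (Or.inl hx)
  have hLA : L ⊆ Aᶜ := fun x hx hxA => by
    have : x ∈ (U ∪ L)ᶜ := hc ▸ Or.inl hxA
    exact this (Or.inr hx)
  have oA := hA.isOpen_compl
  have hUV := h.cU.subset_connectedComponentIn ht hUA
  have hLV := h.cL.subset_connectedComponentIn hb hLA
  have hdj : Disjoint (connectedComponentIn Aᶜ t) (connectedComponentIn Aᶜ b) := by
    rw [Set.disjoint_left]
    intro z hz hz2
    apply h1
    rw [connectedComponentIn_eq hz, ← connectedComponentIn_eq hz2]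
    exact mem_connectedComponentIn (hLA hb)
  have eU : connectedComponentIn Aᶜ t = U := (h.mU _ oA.connectedComponentIn
    isPreconnected_connectedComponentIn hUV (hdj.mono_right hLV)).antisymm hUV
  have eL : connectedComponentIn Aᶜ b = L := (h.mL _ oA.connectedComponentIn
    isPreconnected_connectedComponentIn hLV (hdj.mono_left hUV)).antisymm hLV
  by_contra hne
  obtain ⟨z, hz⟩ := Set.nonempty_iff_ne_empty.2 hne
  have hzA : z ∈ Aᶜ := fun hh => hAB.le_bot ⟨hh, hz⟩
  have hzUL : z ∈ (U ∪ L)ᶜ := hc ▸ Or.inr hz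
  have hZB : connectedComponentIn Aᶜ z ⊆ B := by
    intro w hw
    have hw' : w ∈ (U ∪ L)ᶜ := by
      rintro (hh | hh)
      · rw [← eU] at hh
        apply hzUL
        left
        rw [← eU, connectedComponentIn_eq hh, ← connectedComponentIn_eq hw]
        exact mem_connectedComponentIn hzA
      · rw [← eL] at hh
        apply hzUL
        right
        rw [← eL, connectedComponentIn_eq hh, ← connectedComponentIn_eq hw]
        exact mem_connectedComponentIn hzA
    rw [hc] at hw'
    exact hw'.resolve_left (connectedComponentIn_subset _ _ hw)
  have hcl : closure (connectedComponentIn Aᶜ z) ⊆ connectedComponentIn Aᶜ z := by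
    apply isPreconnected_connectedComponentIn.closure.subset_connectedComponentIn
    · exact subset_closure (mem_connectedComponentIn hzA)
    · exact (closure_minimal hZB hB).trans (fun x hx hxA => hAB.le_bot ⟨hxA, hx⟩)
  have hclop : IsClopen (connectedComponentIn Aᶜ z) :=
    ⟨isClosed_of_closure_subset hcl, oA.connectedComponentIn⟩
  rcases isClopen_iff.1 hclop with h0 | h0
  · have := mem_connectedComponentIn hzA
    rw [h0] at this
    exact this
  · have : t ∈ B := hZB (h0 ▸ Set.mem_univ t)
    have : t ∈ (U ∪ L)ᶜ := hc ▸ Or.inr this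
    exact this (Or.inl ht)

theorem EndPair.ne {U L : Set Ann} (h : EndPair U L) : U.Nonempty ∧ L.Nonempty := by
  obtain ⟨M, hM⟩ := h.eU
  obtain ⟨m, hm⟩ := h.eL
  exact ⟨⟨(0, M + 1), hM _ (by simp)⟩, ⟨(0, m - 1), hm _ (by simp)⟩⟩

theorem EndPair.conn {U L : Set Ann} (h : EndPair U L) : IsConnected (U ∪ L)ᶜ := by
  obtain ⟨⟨t, ht⟩, ⟨b, hb⟩⟩ := h.ne
  obtain ⟨m, hm⟩ := h.eL
  have hK : IsClosed (U ∪ L)ᶜ := (h.oU.union h.oL).isClosed_compl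
  constructor
  · by_contra hne
    rw [Set.not_nonempty_iff_eq_empty, Set.compl_empty_iff] at hne
    have hp := (isPreconnected_univ (α := Ann)) U L h.oU h.oL hne.ge ⟨t, by simpa using ht⟩
      ⟨b, by simpa using hb⟩
    obtain ⟨z, -, hz⟩ := hp
    exact h.dj.le_bot hz
  · rw [isPreconnected_closed_iff]
    intro A B hA hB hcov hAn hBn
    by_contra hne
    rw [Set.not_nonempty_iff_eq_empty] at hne
    have hdj : Disjoint ((U ∪ L)ᶜ ∩ A) ((U ∪ L)ᶜ ∩ B) := by
      rw [Set.disjoint_left]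
      intro z hz hz2
      have : z ∈ (U ∪ L)ᶜ ∩ (A ∩ B) := ⟨hz.1, hz.2, hz2.2⟩
      rw [hne] at this
      exact this
    have hc : (U ∪ L)ᶜ = ((U ∪ L)ᶜ ∩ A) ∪ ((U ∪ L)ᶜ ∩ B) := by
      rw [← Set.inter_union_distrib_left]
      exact (Set.inter_eq_left.2 hcov).symm
    have cA := hK.inter hA
    have cB := hK.inter hB
    generalize (U ∪ L)ᶜ ∩ A = A' at *
    generalize (U ∪ L)ᶜ ∩ B = B' at *
    by_cases h1 : b ∈ connectedComponentIn A'ᶜ t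
    · by_cases h2 : b ∈ connectedComponentIn B'ᶜ t
      · exact ann_jan cA cB hdj h.oU h.oL h.dj hc m hm ht hb h1 h2
      · exact hAn.ne_empty (h.aux cB cA hdj.symm (by rw [hc, Set.union_comm]) ht hb h2)
    · exact hBn.ne_empty (h.aux cA cB hdj hc ht hb h1)

theorem pre_Iio (m : ℝ) : IsPreconnected {p : Ann | p.2 < m} := by
  have : {p : Ann | p.2 < m} = Set.univ ×ˢ Set.Iio m := by ext; simp
  rw [this]
  exact isPreconnected_univ.prod isPreconnected_Iio

theorem pre_Ioi (m : ℝ) : IsPreconnected {p : Ann | m < p.2} := by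
  have : {p : Ann | m < p.2} = Set.univ ×ˢ Set.Ioi m := by ext; simp
  rw [this]
  exact isPreconnected_univ.prod isPreconnected_Ioi

theorem unbBelow_ex {S : Set Ann} (h : UnbBelow S) (m : ℝ) : ∃ p ∈ S, p.2 < m := by
  obtain ⟨_, ⟨p, hp, rfl⟩, h2⟩ := not_bddBelow_iff.1 h m
  exact ⟨p, hp, h2⟩

theorem unbAbove_ex {S : Set Ann} (h : UnbAbove S) (m : ℝ) : ∃ p ∈ S, m < p.2 := by
  obtain ⟨_, ⟨p, hp, rfl⟩, h2⟩ := not_bddAbove_iff.1 h m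
  exact ⟨p, hp, h2⟩

theorem unbBelow_of {S : Set Ann} (m : ℝ) (h : ∀ p : Ann, p.2 < m → p ∈ S) : UnbBelow S := by
  refine not_bddBelow_iff.2 fun x => ⟨min x m - 1, ⟨(0, min x m - 1), h _ ?_, rfl⟩, ?_⟩
  · have := min_le_right x m
    show min x m - 1 < m
    linarith
  · have := min_le_left x m
    linarith

theorem unbAbove_of {S : Set Ann} (m : ℝ) (h : ∀ p : Ann, m < p.2 → p ∈ S) : UnbAbove S := by
  refine not_bddAbove_iff.2 fun x => ⟨max x m + 1, ⟨(0, max x m + 1), h _ ?_, rfl⟩, ?_⟩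
  · have := le_max_right x m
    show m < max x m + 1
    linarith
  · have := le_max_left x m
    linarith

theorem lower_props {S : Set Ann} {m : ℝ} (hS : ∀ p : Ann, p.2 < m → p ∉ S) :
    IsOpen (lowerComp S) ∧ IsPreconnected (lowerComp S) ∧ Disjoint S (lowerComp S) ∧
    (∀ p : Ann, p.2 < m → p ∈ lowerComp S) ∧
    (∀ V, IsOpen V → IsPreconnected V → UnbBelow V → Disjoint S V → V ⊆ lowerComp S) := by
  have := ann_lc
  have hsub : {p : Ann | p.2 < m} ⊆ (closure S)ᶜ := by
    have ho : IsOpen {p : Ann | p.2 < m} := isOpen_lt continuous_snd continuous_const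
    have hd : Disjoint S {p : Ann | p.2 < m} := Set.disjoint_left.2 fun p hp hp2 => hS p hp2 hp
    exact fun p hp hp2 => (hd.closure_left ho).le_bot ⟨hp2, hp⟩
  have hp0 : ((0, m - 1) : Ann) ∈ {p : Ann | p.2 < m} := by simp
  have hc := (pre_Iio m).subset_connectedComponentIn hp0 hsub
  have heq : lowerComp S = connectedComponentIn (closure S)ᶜ (0, m - 1) := by
    ext z
    constructor
    · rintro ⟨hz, hu⟩
      obtain ⟨p, hp, hpm⟩ := unbBelow_ex hu m
      rw [connectedComponentIn_eq (hc hpm), ← connectedComponentIn_eq hp]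
      exact mem_connectedComponentIn hz
    · intro hz
      refine ⟨connectedComponentIn_subset _ _ hz, ?_⟩
      rw [← connectedComponentIn_eq hz]
      exact unbBelow_of m fun p hp => hc hp
  refine ⟨?_, ?_, ?_, ?_, ?_⟩
  · rw [heq]; exact isClosed_closure.isOpen_compl.connectedComponentIn
  · rw [heq]; exact isPreconnected_connectedComponentIn
  · exact Set.disjoint_left.2 fun p hp hp2 => hp2.1 (subset_closure hp)
  · rw [heq]; exact fun p hp => hc hp
  · intro V oV cV uV dV z hz
    have hV : V ⊆ (closure S)ᶜ := fun p hp hp2 => (dV.closure_left oV).le_bot ⟨hp2, hp⟩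
    refine ⟨hV hz, fun hb => uV (hb.mono (Set.image_mono ?_))⟩
    exact cV.subset_connectedComponentIn hz hV

theorem upper_props {S : Set Ann} {m : ℝ} (hS : ∀ p : Ann, m < p.2 → p ∉ S) :
    IsOpen (upperComp S) ∧ IsPreconnected (upperComp S) ∧ Disjoint S (upperComp S) ∧
    (∀ p : Ann, m < p.2 → p ∈ upperComp S) ∧
    (∀ V, IsOpen V → IsPreconnected V → UnbAbove V → Disjoint S V → V ⊆ upperComp S) := by
  have := ann_lc
  have hsub : {p : Ann | m < p.2} ⊆ (closure S)ᶜ := by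
    have ho : IsOpen {p : Ann | m < p.2} := isOpen_lt continuous_const continuous_snd
    have hd : Disjoint S {p : Ann | m < p.2} := Set.disjoint_left.2 fun p hp hp2 => hS p hp2 hp
    exact fun p hp hp2 => (hd.closure_left ho).le_bot ⟨hp2, hp⟩
  have hp0 : ((0, m + 1) : Ann) ∈ {p : Ann | m < p.2} := by simp
  have hc := (pre_Ioi m).subset_connectedComponentIn hp0 hsub
  have heq : upperComp S = connectedComponentIn (closure S)ᶜ (0, m + 1) := by
    ext z
    constructor
    · rintro ⟨hz, hu⟩
      obtain ⟨p, hp, hpm⟩ := unbAbove_ex hu m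
      rw [connectedComponentIn_eq (hc hpm), ← connectedComponentIn_eq hp]
      exact mem_connectedComponentIn hz
    · intro hz
      refine ⟨connectedComponentIn_subset _ _ hz, ?_⟩
      rw [← connectedComponentIn_eq hz]
      exact unbAbove_of m fun p hp => hc hp
  refine ⟨?_, ?_, ?_, ?_, ?_⟩
  · rw [heq]; exact isClosed_closure.isOpen_compl.connectedComponentIn
  · rw [heq]; exact isPreconnected_connectedComponentIn
  · exact Set.disjoint_left.2 fun p hp hp2 => hp2.1 (subset_closure hp)
  · rw [heq]; exact fun p hp => hc hp
  · intro V oV cV uV dV z hz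
    have hV : V ⊆ (closure S)ᶜ := fun p hp hp2 => (dV.closure_left oV).le_bot ⟨hp2, hp⟩
    refine ⟨hV hz, fun hb => uV (hb.mono (Set.image_mono ?_))⟩
    exact cV.subset_connectedComponentIn hz hV

/-- The two sides of an annular continuum. -/
theorem annular_sides {E : Set Ann} (hE : IsAnnularContinuum E) :
    ∃ U L : Set Ann, ∃ M m : ℝ, Eᶜ = U ∪ L ∧ Disjoint U L ∧ IsOpen U ∧ IsOpen L ∧
      IsPreconnected U ∧ IsPreconnected L ∧ (∀ p : Ann, M < p.2 → p ∈ U) ∧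
      (∀ p : Ann, p.2 < m → p ∈ L) ∧ U = upperComp E ∧ L = lowerComp E := by
  obtain ⟨hK, -, hunb, x, y, hx, hy, hxy, hall⟩ := hE
  obtain ⟨M, hM⟩ := (hK.image continuous_snd).bddAbove
  obtain ⟨m, hm⟩ := (hK.image continuous_snd).bddBelow
  have hM' : ∀ p : Ann, M < p.2 → p ∉ E := fun p hp hpE =>
    absurd (hM ⟨p, hpE, rfl⟩) (not_le.2 hp)
  have hm' : ∀ p : Ann, p.2 < m → p ∉ E := fun p hp hpE =>
    absurd (hm ⟨p, hpE, rfl⟩) (not_le.2 hp)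
  obtain ⟨oU, cU, dU, eU, mU⟩ := upper_props hM'
  obtain ⟨oL, cL, dL, eL, mL⟩ := lower_props hm'
  have hcl : closure E = E := hK.isClosed.closure_eq
  have hcov : Eᶜ = upperComp E ∪ lowerComp E := by
    apply Set.Subset.antisymm
    · intro z hz
      have := hunb z hz
      by_cases h1 : UnbAbove (connectedComponentIn Eᶜ z)
      · left; exact ⟨by rwa [hcl], by rwa [hcl]⟩
      · right
        refine ⟨by rwa [hcl], ?_⟩
        rw [hcl]
        intro h2
        exact this ⟨not_not.1 h1, h2⟩
    · rintro z (hz | hz)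
      · have := hz.1; rwa [hcl] at this
      · have := hz.1; rwa [hcl] at this
  refine ⟨upperComp E, lowerComp E, M, m, hcov, ?_, oU, oL, cU, cL, eU, eL, rfl, rfl⟩
  rw [Set.disjoint_left]
  intro z hz hz2
  have hpre : IsPreconnected Eᶜ := by
    rw [hcov]
    exact cU.union z hz hz2 cL
  apply hxy
  exact connectedComponentIn_eq (hpre.subset_connectedComponentIn hx le_rfl hy)

theorem EndPair.bdd {U L : Set Ann} (h : EndPair U L) : ∃ M m : ℝ,
    (∀ p : Ann, M < p.2 → p ∈ U) ∧ (∀ p : Ann, p.2 < m → p ∈ L) := by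
  obtain ⟨M, hM⟩ := h.eU
  obtain ⟨m, hm⟩ := h.eL
  exact ⟨M, m, hM, hm⟩

theorem comp_of_clopen {U L : Set Ann} (oU : IsOpen U) (oL : IsOpen L) (cU : IsPreconnected U)
    (dj : Disjoint U L) {z : Ann} (hz : z ∈ U) : connectedComponentIn (U ∪ L) z = U := by
  apply Set.Subset.antisymm
  · exact isPreconnected_connectedComponentIn.subset_left_of_subset_union oU oL dj
      (connectedComponentIn_subset _ _) ⟨z, mem_connectedComponentIn (Or.inl hz), hz⟩
  · exact cU.subset_connectedComponentIn hz Set.subset_union_left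

theorem EndPair.circloid {U L : Set Ann} (h : EndPair U L) : IsCircloidA (U ∪ L)ᶜ := by
  obtain ⟨⟨t, ht⟩, ⟨b, hb⟩⟩ := h.ne
  obtain ⟨M, m, hM, hm⟩ := h.bdd
  have hcU : ∀ z ∈ U, connectedComponentIn (U ∪ L) z = U := fun z hz =>
    comp_of_clopen h.oU h.oL h.cU h.dj hz
  have hcL : ∀ z ∈ L, connectedComponentIn (U ∪ L) z = L := fun z hz => by
    rw [Set.union_comm]; exact comp_of_clopen h.oL h.oU h.cL h.dj.symm hz
  constructor
  · refine ⟨?_, h.conn, ?_, ?_⟩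
    · refine (isCompact_univ.prod (isCompact_Icc (a := m) (b := M))).of_isClosed_subset
        (h.oU.union h.oL).isClosed_compl ?_
      intro p hp
      refine ⟨Set.mem_univ _, ?_, ?_⟩
      · by_contra hlt
        exact hp (Or.inr (hm p (not_le.1 hlt)))
      · by_contra hlt
        exact hp (Or.inl (hM p (not_le.1 hlt)))
    · rw [compl_compl]
      rintro z (hz | hz)
      · rw [hcU z hz]
        exact fun hb => unbAbove_of M hM hb.1
      · rw [hcL z hz]
        exact fun hb => unbBelow_of m hm hb.2
    · rw [compl_compl]
      refine ⟨t, b, Or.inl ht, Or.inr hb, ?_, ?_⟩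
      · rw [hcU t ht, hcL b hb]
        intro he
        exact h.dj.le_bot ⟨ht, he ▸ ht⟩
      · rw [hcU t ht, hcL b hb]
        rintro z (hz | hz)
        · left; exact hcU z hz
        · right; exact hcL z hz
  · intro E hE hann
    obtain ⟨U', L', M', m', hcov, dj', oU', oL', cU', cL', eU', eL', -, -⟩ := annular_sides hann
    have hsub : U ∪ L ⊆ U' ∪ L' := by
      rw [← hcov]; exact Set.subset_compl_comm.1 hE
    have hUU : U ⊆ U' := h.cU.subset_left_of_subset_union oU' oL' dj'
      (Set.subset_union_left.trans hsub)
      ⟨(0, max M M' + 1), hM _ (by simpa using (le_max_left M M').trans_lt (lt_add_one _)),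
        eU' _ (by simpa using (le_max_right M M').trans_lt (lt_add_one _))⟩
    have hLL : L ⊆ L' := h.cL.subset_right_of_subset_union oU' oL' dj'
      (Set.subset_union_right.trans hsub)
      ⟨(0, min m m' - 1), hm _ (by simpa using (sub_one_lt _).trans_le (min_le_left m m')),
        eL' _ (by simpa using (sub_one_lt _).trans_le (min_le_right m m'))⟩
    have e1 : U' = U := (h.mU _ oU' cU' hUU (dj'.mono_right hLL)).antisymm hUU
    have e2 : L' = L := (h.mL _ oL' cL' hLL (dj'.mono_left hUU)).antisymm hLL
    rw [← compl_compl E, hcov, e1, e2]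

theorem statement10 (E : Set Ann) (hE : IsAnnularContinuum E) :
    (IsCircloidA (Cplus E) ∧ Cplus E ⊆ E) ∧ (IsCircloidA (Cminus E) ∧ Cminus E ⊆ E) := by
  obtain ⟨U, L, M, m, hcov, dj, oU, oL, cU, cL, eU, eL, hU, hL⟩ := annular_sides hE
  constructor
  · unfold Cplus
    rw [← hU]
    obtain ⟨o1, c1, d1, e1, m1⟩ := lower_props (S := U) (m := m)
      (fun p hp hpU => dj.le_bot ⟨hpU, eL p hp⟩)
    obtain ⟨o2, c2, d2, e2, m2⟩ := upper_props (S := lowerComp U) (m := M)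
      (fun p hp hpU => d1.le_bot ⟨eU p hp, hpU⟩)
    have hL1 : L ⊆ lowerComp U := m1 L oL cL (unbBelow_of m eL) dj
    have hU1 : U ⊆ upperComp (lowerComp U) := m2 U oU cU (unbAbove_of M eU) d1.symm
    constructor
    · rw [Set.union_comm]
      refine EndPair.circloid ⟨o2, o1, c2, c1, d2.symm, ⟨M, e2⟩, ⟨m, e1⟩, ?_, ?_⟩
      · intro V oV cV hV dV
        exact m2 V oV cV (unbAbove_of M fun p hp => hV (e2 p hp)) dV.symm
      · intro V oV cV hV dV
        exact m1 V oV cV (unbBelow_of m fun p hp => hV (e1 p hp)) (dV.mono_left hU1)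
    · rw [Set.compl_subset_comm, hcov, Set.union_comm]
      exact Set.union_subset_union hL1 hU1
  · unfold Cminus
    rw [← hL]
    obtain ⟨o1, c1, d1, e1, m1⟩ := upper_props (S := L) (m := M)
      (fun p hp hpU => dj.le_bot ⟨eU p hp, hpU⟩)
    obtain ⟨o2, c2, d2, e2, m2⟩ := lower_props (S := upperComp L) (m := m)
      (fun p hp hpU => d1.le_bot ⟨eL p hp, hpU⟩)
    have hU1 : U ⊆ upperComp L := m1 U oU cU (unbAbove_of M eU) dj.symm
    have hL1 : L ⊆ lowerComp (upperComp L) := m2 L oL cL (unbBelow_of m eL) d1.symm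
    constructor
    · refine EndPair.circloid ⟨o1, o2, c1, c2, d2, ⟨M, e1⟩, ⟨m, e2⟩, ?_, ?_⟩
      · intro V oV cV hV dV
        exact m1 V oV cV (unbAbove_of M fun p hp => hV (e1 p hp)) (dV.symm.mono_left hL1)
      · intro V oV cV hV dV
        exact m2 V oV cV (unbBelow_of m fun p hp => hV (e2 p hp)) dV
    · rw [Set.compl_subset_comm, hcov]
      exact Set.union_subset_union hU1 hL1
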